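/- Let m ≥ 2 be even and c > 0 even, and set R = (m² + mc)/4 + c/2. For any 2-coloring of {1, ..., R} there exists a monochromatic solution to x_1 + x_2 + ... + x_m + c = 2·x_0. -/

import Mathlib

/-- The sums of `n` terms taken from the integer interval `[a, b]` include every integer
in `[n * a, n * b]`. -/
theorem exists_sum_eq_of_mem_interval {a b : ℕ} (hab : a ≤ b) (n : ℕ) :
    ∀ S : ℕ, n * a ≤ S → S ≤ n * b →
      ∃ x : Fin n → ℕ, (∀ i, a ≤ x i ∧ x i ≤ b) ∧ ∑ i, x i = S := by
  induction n with
  | zero => exact fun S _ h => ⟨Fin.elim0, fun i => i.elim0, by simp at h ⊢; omega⟩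
  | succ n ih =>
    intro S h1 h2
    rw [Nat.succ_mul] at h1 h2
    by_cases h : S ≤ n * a + b
    · refine ⟨Fin.cons (S - n * a) fun _ => a, fun i => ?_, ?_⟩
      · refine Fin.cases ?_ (fun j => ?_) i
        · simp only [Fin.cons_zero]; omega
        · simp only [Fin.cons_succ]; omega
      · simp only [Fin.sum_univ_succ, Fin.cons_zero, Fin.cons_succ, Finset.sum_const,
          Finset.card_univ, Fintype.card_fin, smul_eq_mul]
        omega
    · obtain ⟨x, hx, hs⟩ := ih (S - b) (by omega) (by omega)
      refine ⟨Fin.cons b x, fun i => ?_, ?_⟩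
      · refine Fin.cases ?_ (fun j => ?_) i
        · simp only [Fin.cons_zero]; omega
        · simpa only [Fin.cons_succ] using hx j
      · simp only [Fin.sum_univ_succ, Fin.cons_zero, Fin.cons_succ, hs]
        omega

/-- The equation `x₁ + ⋯ + x₂ₖ + 2d = 2x₀` has a solution in `{1, …, R}` that is monochromatic
under `Δ`. -/
def HasMonoSolution (k d R : ℕ) (Δ : ℕ → Fin 2) : Prop :=
  ∃ (x : Fin (k + k) → ℕ) (y : ℕ), (∀ i, x i ∈ Finset.Icc 1 R) ∧ y ∈ Finset.Icc 1 R ∧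
    (∀ i, Δ (x i) = Δ y) ∧ ∑ i, x i + (d + d) = 2 * y

namespace HasMonoSolution

variable {k d R : ℕ} {Δ : ℕ → Fin 2}

theorem of_interval {a b y : ℕ} (ha : 1 ≤ a) (hab : a ≤ b) (hb : b ≤ R)
    (hy : y ≤ R) (hc : ∀ t, a ≤ t → t ≤ b → Δ t = Δ y)
    (h1 : k * a + d ≤ y) (h2 : y ≤ k * b + d) (hy1 : 1 ≤ y) : HasMonoSolution k d R Δ := by
  obtain ⟨x, hx, hs⟩ := exists_sum_eq_of_mem_interval hab (k + k) (2 * y - 2 * d)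
    (by rw [Nat.add_mul]; omega) (by rw [Nat.add_mul]; omega)
  refine ⟨x, y, fun i => ?_, Finset.mem_Icc.2 ⟨hy1, hy⟩, fun i => hc _ (hx i).1 (hx i).2, ?_⟩
  · have := hx i
    exact Finset.mem_Icc.2 ⟨by omega, by omega⟩
  · omega

theorem of_const {a : ℕ} (ha : 1 ≤ a) (haR : a ≤ R) (hk : 1 ≤ k) (hy : k * a + d ≤ R)
    (hc : Δ a = Δ (k * a + d)) : HasMonoSolution k d R Δ := by
  have : 0 < k * a := Nat.mul_pos hk ha
  refine of_interval ha le_rfl haR hy (fun t h1 h2 => ?_) le_rfl le_rfl (by omega)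
  rwa [le_antisymm h2 h1]

theorem of_cons_interval {a b y z : ℕ} (hk : 1 ≤ k) (ha : 1 ≤ a) (hab : a ≤ b) (hb : b ≤ R)
    (hz : 1 ≤ z) (hzR : z ≤ R) (hy : y ≤ R) (hc : ∀ t, a ≤ t → t ≤ b → Δ t = Δ y)
    (hzc : Δ z = Δ y) (h1 : z + 2 * (k * a) + 2 * d ≤ 2 * y + a)
    (h2 : 2 * y + b ≤ z + 2 * (k * b) + 2 * d) : HasMonoSolution k d R Δ := by
  obtain ⟨n, hn⟩ : ∃ n, k + k = n + 1 := ⟨k + k - 1, by omega⟩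
  have e (t : ℕ) : n * t + t = 2 * (k * t) := by
    rw [← Nat.succ_mul, Nat.succ_eq_add_one, ← hn]; ring
  have ea := e a
  have eb := e b
  have hka : 1 * a ≤ k * a := Nat.mul_le_mul_right a hk
  obtain ⟨x, hx, hs⟩ := exists_sum_eq_of_mem_interval hab n (2 * y - 2 * d - z)
    (by omega) (by omega)
  unfold HasMonoSolution
  rw [hn]
  refine ⟨Fin.cons z x, y, fun i => ?_, Finset.mem_Icc.2 ⟨by omega, hy⟩, fun i => ?_, ?_⟩
  · refine Fin.cases ?_ (fun j => ?_) i
    · simp only [Fin.cons_zero, Finset.mem_Icc]; omega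
    · have := hx j
      simp only [Fin.cons_succ, Finset.mem_Icc]; omega
  · refine Fin.cases ?_ (fun j => ?_) i
    · simpa only [Fin.cons_zero] using hzc
    · simpa only [Fin.cons_succ] using hc _ (hx j).1 (hx j).2
  · simp only [Fin.sum_univ_succ, Fin.cons_zero, Fin.cons_succ, hs]
    omega

theorem of_halves {a b y : ℕ} (ha : 1 ≤ a) (haR : a ≤ R) (hb : 1 ≤ b) (hbR : b ≤ R)
    (hy : 1 ≤ y) (hyR : y ≤ R) (hac : Δ a = Δ y) (hbc : Δ b = Δ y)
    (h : k * a + k * b + 2 * d = 2 * y) : HasMonoSolution k d R Δ := by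
  refine ⟨Fin.append (fun _ => a) (fun _ => b), y, fun i => ?_, Finset.mem_Icc.2 ⟨hy, hyR⟩,
    fun i => ?_, ?_⟩
  · refine Fin.addCases (fun j => ?_) (fun j => ?_) i
    · rw [Fin.append_left]; exact Finset.mem_Icc.2 ⟨ha, haR⟩
    · rw [Fin.append_right]; exact Finset.mem_Icc.2 ⟨hb, hbR⟩
  · refine Fin.addCases (fun j => ?_) (fun j => ?_) i
    · rwa [Fin.append_left]
    · rwa [Fin.append_right]
  · simp only [Fin.sum_univ_add, Fin.append_left, Fin.append_right, Finset.sum_const,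
      Finset.card_univ, Fintype.card_fin, smul_eq_mul]
    omega

end HasMonoSolution

open HasMonoSolution

theorem hasMonoSolution_one (d : ℕ) (Δ : ℕ → Fin 2) :
    HasMonoSolution 1 d (1 + d + d) Δ := by
  by_contra no
  have h1 : Δ 1 ≠ Δ (1 * 1 + d) := fun h =>
    no (of_const le_rfl (by omega) le_rfl (by omega) h)
  have h2 : Δ (1 + d) ≠ Δ (1 * (1 + d) + d) := fun h =>
    no (of_const (by omega) (by omega) le_rfl (by omega) h)
  rw [one_mul] at h1 h2
  exact no (of_halves (a := 1) (b := 1 + d + d) (y := 1 + d + d) le_rfl (by omega) (by omega)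
    le_rfl (by omega) le_rfl (by omega) rfl (by omega))

theorem hasMonoSolution_of_two_le {k d : ℕ} (hk : 2 ≤ k) (hd : 1 ≤ d) (Δ : ℕ → Fin 2) :
    HasMonoSolution k d (k * k + k * d + d) Δ := by
  by_contra no
  obtain ⟨R, hR⟩ : ∃ R, R = k * k + k * d + d := ⟨_, rfl⟩
  rw [← hR] at no
  have hkk : 2 * k ≤ k * k := Nat.mul_le_mul_right k hk
  have hkd : 2 * d ≤ k * d := Nat.mul_le_mul_right d hk
  have blue_eq {u v : ℕ} (hu : Δ u ≠ Δ 1) (hv : Δ v ≠ Δ 1) : Δ u = Δ v := by omega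
  have hp : Δ (k + d) ≠ Δ 1 := fun h =>
    no (of_const (a := 1) le_rfl (by omega) (by omega) (by omega) (by rw [mul_one, h]))
  -- `s + 1` is the least element whose color differs from that of `1`.
  obtain ⟨s, hs1, hsp, hred, hblue⟩ : ∃ s, 1 ≤ s ∧ s + 1 ≤ k + d ∧
      (∀ t, 1 ≤ t → t ≤ s → Δ t = Δ 1) ∧ Δ (s + 1) ≠ Δ 1 := by
    have hex : ∃ t, 1 ≤ t ∧ Δ t ≠ Δ 1 := ⟨k + d, by omega, hp⟩
    classical
    have hf := Nat.find_spec hex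
    have hle := Nat.find_min' hex ⟨by omega, hp⟩
    have hne : Nat.find hex ≠ 1 := fun h => hf.2 (by rw [h])
    refine ⟨Nat.find hex - 1, by omega, by omega, fun t h1 h2 => ?_, ?_⟩
    · by_contra h
      exact Nat.find_min hex (m := t) (by omega) ⟨h1, h⟩
    · rw [Nat.sub_add_cancel hf.1]; exact hf.2
  have hks : k * (s + 1) ≤ k * (k + d) := Nat.mul_le_mul_left k hsp
  rw [Nat.mul_add, Nat.mul_add, mul_one] at hks
  have hs_le : 2 * s ≤ k * s := Nat.mul_le_mul_right s hk
  have hint (y : ℕ) (h1 : k + d ≤ y) (h2 : y ≤ k * s + d) : Δ y ≠ Δ 1 := fun h =>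
    no (of_interval (a := 1) (b := s) (y := y) le_rfl hs1 (by omega) (by omega)
      (fun t h1 h2 => (hred t h1 h2).trans h.symm) (by omega) h2 (by omega))
  have hw : Δ (k * s + k + d) = Δ 1 := by
    by_contra h
    refine no (of_const (a := s + 1) (by omega) (by omega) (by omega) ?_ ?_)
    · rw [Nat.mul_add]; omega
    · rw [Nat.mul_add, mul_one]; exact blue_eq hblue h
  have hdbig : k * s + 2 ≤ d + k := by
    by_contra! h
    have hmul : 0 ≤ ((k : ℤ) - 2) * ((s : ℤ) - 1) := mul_nonneg (by omega) (by omega)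
    have : k + s ≤ k * s + 1 := by zify; nlinarith
    exact no (of_cons_interval (a := 1) (b := s) (y := k * s + k + d) (z := k * s + k + d)
      (by omega) le_rfl hs1 (by omega) (by omega) (by omega) (by omega)
      (fun t h1 h2 => (hred t h1 h2).trans hw.symm) rfl (by omega) (by omega))
  have hRbig : 5 * k + 5 * d ≤ 2 * R + 2 := by
    obtain rfl | h3 : k = 2 ∨ 3 ≤ k := by omega
    · omega
    · have := Nat.mul_le_mul_right k h3
      have := Nat.mul_le_mul_right d h3
      omega
  obtain rfl | hs2 : s = 1 ∨ 2 ≤ s := by omega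
  · rw [mul_one] at *
    have hk_two_le : k * 2 ≤ k * d := Nat.mul_le_mul_left k (by omega)
    have h3 : Δ 3 ≠ Δ 1 := fun h =>
      no (of_halves (a := 1) (b := 3) (y := k + k + d) le_rfl (by omega) (by omega) (by omega)
        (by omega) (by omega) hw.symm (h.trans hw.symm) (by omega))
    have h23 (t : ℕ) (h1 : 2 ≤ t) (h2 : t ≤ 3) : Δ t ≠ Δ 1 := by
      obtain rfl | rfl : t = 2 ∨ t = 3 := by omega
      exacts [hblue, h3]
    have hI (y : ℕ) (h1 : 2 * k + d ≤ y) (h2 : y ≤ 3 * k + d) : Δ y = Δ 1 := by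
      by_contra h
      exact no (of_interval (a := 2) (b := 3) (y := y) (by omega) (by omega) (by omega)
        (by omega) (fun t h1 h2 => blue_eq (h23 t h1 h2) h) (by omega) (by omega) (by omega))
    obtain ⟨y, z, hz1, hz2, hy⟩ : ∃ y z, 3 * k + d ≤ z + 1 ∧ z ≤ 3 * k + d ∧
        2 * y = z + 2 * k - 1 + 2 * d := by
      obtain h | h := Nat.even_or_odd' (5 * k + 3 * d) |>.choose_spec
      · exact ⟨(5 * k + 3 * d - 2) / 2, 3 * k + d - 1, by omega, by omega, by omega⟩
      · exact ⟨(5 * k + 3 * d - 1) / 2, 3 * k + d, by omega, by omega, by omega⟩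
    by_cases hc : Δ y = Δ 1
    · exact no (of_cons_interval (a := 1) (b := 1) (y := y) (z := z) (by omega) le_rfl le_rfl
        (by omega) (by omega) (by omega) (by omega)
        (fun t h1 h2 => by rw [hc, le_antisymm h2 h1])
        ((hI z (by omega) (by omega)).trans hc.symm) (by omega) (by omega))
    · exact no (of_cons_interval (a := 2) (b := 3) (y := y) (z := k + d) (by omega) (by omega)
        (by omega) (by omega) (by omega) (by omega) (by omega)
        (fun t h1 h2 => blue_eq (h23 t h1 h2) hc) (blue_eq hp hc) (by omega) (by omega))
  · have hk2 : k * 2 ≤ k * s := Nat.mul_le_mul_left k hs2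
    obtain ⟨y, z, hz1, hz2, hy⟩ : ∃ y z, k + d ≤ z ∧ z ≤ k + d + 1 ∧
        2 * y + (s + 1) = z + 2 * (k * s + k) + 2 * d := by
      obtain h | h := Nat.even_or_odd' (k + d + s + 1) |>.choose_spec
      · exact ⟨(k + d + 2 * (k * s + k) + 2 * d - (s + 1)) / 2, k + d, by omega, by omega,
          by omega⟩
      · exact ⟨(k + d + 1 + 2 * (k * s + k) + 2 * d - (s + 1)) / 2, k + d + 1, by omega,
          by omega, by omega⟩
    by_cases hc : Δ y = Δ 1
    · exact no (of_cons_interval (a := 1) (b := s) (y := y) (z := k * s + k + d) (by omega)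
        le_rfl hs1 (by omega) (by omega) (by omega) (by omega)
        (fun t h1 h2 => (hred t h1 h2).trans hc.symm) (hw.trans hc.symm) (by omega) (by omega))
    · have e : k * (s + 1) = k * s + k := by ring
      exact no (of_cons_interval (a := s + 1) (b := s + 1) (y := y) (z := z) (by omega)
        (by omega) le_rfl (by omega) (by omega) (by omega) (by omega)
        (fun t h1 h2 => by rw [le_antisymm h2 h1]; exact blue_eq hblue hc)
        (blue_eq (hint z hz1 (by omega)) hc) (by omega) (by omega))

/-- for `m ≥ 2` even and `c > 0` even, with `R = (m² + mc)/4 + c/2`,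
every 2-coloring of `{1,...,R}` admits a monochromatic solution to
`x_1 + ... + x_m + c = 2·x_0`. -/
theorem stmt2 (m c : ℕ) (hm : 2 ≤ m) (hme : Even m) (hc : 0 < c) (hce : Even c)
    (Δ : ℕ → Fin 2) :
    ∃ (x : Fin m → ℕ) (x0 : ℕ),
      (∀ i, x i ∈ Finset.Icc 1 ((m ^ 2 + m * c) / 4 + c / 2)) ∧
      x0 ∈ Finset.Icc 1 ((m ^ 2 + m * c) / 4 + c / 2) ∧
      (∀ i, Δ (x i) = Δ x0) ∧
      (∑ i, x i) + c = 2 * x0 := by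
  obtain ⟨k, rfl⟩ := hme
  obtain ⟨d, rfl⟩ := hce
  have hR : ((k + k) ^ 2 + (k + k) * (d + d)) / 4 + (d + d) / 2 = k * k + k * d + d := by
    have : (k + k) ^ 2 + (k + k) * (d + d) = 4 * (k * k + k * d) := by ring
    omega
  rw [hR]
  change HasMonoSolution k d _ Δ
  obtain rfl | hk : k = 1 ∨ 2 ≤ k := by omega
  · simpa only [one_mul] using hasMonoSolution_one d Δ
  · exact hasMonoSolution_of_two_le hk (by omega) Δ
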